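/- Let G be a countably infinite discrete amenable group, X an infinite compact metrizable space, and α: G ↷ X a minimal free continuous action such that E_G(X) is compact in the weak* topology. Then for every ε > 0 and every finite family W_1, …, W_L of pairwise disjoint closed subsets of E_G(X), there exist pairwise disjoint compact subsets K_1, …, K_L of X such that μ(K_j) > 1 − ε for every j = 1, …, L and every μ ∈ W_j. -/

import Mathlib

open MeasureTheory Set Pointwise

variable (G X : Type*)

section Defs

variable [Group G] [MetricSpace X] [MeasurableSpace X] [MulAction G X]

/-- A Borel probability measure is `G`-invariant. -/
def InvariantMeasure (μ : ProbabilityMeasure X) : Prop :=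
  ∀ g : G, MeasureTheory.Measure.map (fun x => g • x) (μ : Measure X) = (μ : Measure X)

/-- `M_G(X)`: the set of `G`-invariant Borel probability measures on `X`. -/
def MG : Set (ProbabilityMeasure X) := {μ | InvariantMeasure G X μ}

/-- `E_G(X)`: the set of ergodic `G`-invariant Borel probability measures on `X`,
i.e. invariant measures giving every `G`-invariant Borel set measure `0` or `1`. -/
def EG : Set (ProbabilityMeasure X) :=
  {μ | InvariantMeasure G X μ ∧
    ∀ A : Set X, MeasurableSet A → (∀ g : G, g • A = A) → μ A = 0 ∨ μ A = 1}

/-- The action of `G` on `X` is free. -/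
def FreeAction : Prop := ∀ (g : G) (x : X), g • x = x → g = 1

/-- The action of `G` on `X` is minimal: there is no proper nonempty closed invariant subset. -/
def MinimalAction : Prop :=
  ∀ C : Set X, IsClosed C → (∀ g : G, g • C ⊆ C) → C = ∅ ∨ C = Set.univ

/-- The small boundary property. -/
def SmallBoundaryProperty : Prop :=
  ∀ (x : X) (U : Set X), IsOpen U → x ∈ U →
    ∃ V : Set X, IsOpen V ∧ x ∈ V ∧ V ⊆ U ∧ ∀ μ ∈ MG G X, μ (frontier V) = 0

/-- `S` is a `(K,δ)`-invariant finite subset of `G`. -/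
def FolnerInv (K : Finset G) (δ : ℝ) (S : Finset G) : Prop :=
  (1 - δ) * (S.card : ℝ) ≤ ({s | s ∈ S ∧ ∀ k ∈ K, k * s ∈ S} : Set G).ncard

/-- `G` is amenable: it admits `(K,δ)`-invariant nonempty finite subsets for all `K, δ`. -/
def AmenableGroup : Prop :=
  ∀ (K : Finset G) (δ : ℝ), 0 < δ → ∃ S : Finset G, S.Nonempty ∧ FolnerInv G K δ S

/-- `(S, V)` is a tower: the translates `s • V`, `s ∈ S`, are pairwise disjoint. -/
def IsTower (S : Finset G) (V : Set X) : Prop :=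
  (S : Set G).Pairwise fun s t => Disjoint (s • V) (t • V)

/-- `F ≺_m O`: subordination with `m`-colored multiplicity. -/
def SubordinateM (m : ℕ) (F O : Set X) : Prop :=
  ∃ (n : ℕ) (U : Fin n → Set X) (s : Fin n → G) (c : Fin n → Fin (m + 1)),
    (∀ k, IsOpen (U k)) ∧ F ⊆ ⋃ k, U k ∧ (∀ k, s k • U k ⊆ O) ∧
    ∀ k l, k ≠ l → c k = c l → Disjoint (s k • U k) (s l • U l)

/-- The action has dynamical `m`-comparison. -/
def HasMComparison (m : ℕ) : Prop :=
  ∀ F O : Set X, IsClosed F → IsOpen O →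
    (∀ μ ∈ MG G X, μ F < μ O) → SubordinateM G X m F O

/-- The action is `m`-almost finite. -/
def MAlmostFinite (m : ℕ) : Prop :=
  ∀ (n : ℕ), 1 ≤ n → ∀ (K : Finset G) (δ : ℝ), 0 < δ →
    ∃ (I : ℕ) (S : Fin I → Finset G) (V : Fin I → Set X) (c : Fin I → Fin (m + 1))
      (S' : Fin I → Finset G),
      (∀ i, IsOpen (V i)) ∧
      (∀ i, IsTower G X (S i) (closure (V i))) ∧
      (∀ i, FolnerInv G K δ (S i)) ∧
      (∀ i, ∀ s ∈ S i, Metric.diam (s • closure (V i)) < δ) ∧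
      (∀ i j, i ≠ j → c i = c j →
        Disjoint ((S i : Set G) • closure (V i)) ((S j : Set G) • closure (V j))) ∧
      (∀ i, S' i ⊆ S i) ∧ (∀ i, ((S' i).card : ℝ) ≤ (S i).card / n) ∧
      SubordinateM G X 0 (Set.univ \ ⋃ i, (S i : Set G) • V i) (⋃ i, (S' i : Set G) • V i)

end Defs

open Filter Topology

noncomputable section ErgHelpers

set_option linter.unusedSectionVars false

variable {G X : Type*}

def eavg [Group G] [MulAction G X] (S : Finset G) (f : X → ℝ) (x : X) : ℝ :=
  (S.card : ℝ)⁻¹ * ∑ s ∈ S, f (s • x)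

theorem eavg_folner [Group G] [MulAction G X] (S : Finset G) (hS : S.Nonempty) (K : Finset G)
    (δ : ℝ) (hF : FolnerInv G K δ S) (g : G) (hg : g ∈ K) (f : X → ℝ) (C : ℝ)
    (hC : ∀ x, |f x| ≤ C) (x : X) :
    |eavg S (fun y => f (g • y)) x - eavg S f x| ≤ 2 * C * δ := by
  classical
  have hC0 : 0 ≤ C := (abs_nonneg _).trans (hC x)
  have hc : (0 : ℝ) < S.card := by exact_mod_cast hS.card_pos
  set S' := S.filter (fun s => g * s ∈ S) with hS'
  have hcard : (1 - δ) * (S.card : ℝ) ≤ S'.card := by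
    refine hF.trans ?_
    rw [← Set.ncard_coe_finset]
    refine Nat.cast_le.2 (Set.ncard_le_ncard ?_ (Finset.finite_toSet _))
    intro s hs
    simp only [Set.mem_ofPred_eq] at hs
    simp [hS', hs.1, hs.2 g hg]
  have himg : S'.image (fun s => g * s) ⊆ S := by
    intro t ht
    simp only [Finset.mem_image, hS', Finset.mem_filter] at ht
    obtain ⟨s, hs, rfl⟩ := ht
    exact hs.2
  have hcimg : (S'.image (fun s => g * s)).card = S'.card :=
    Finset.card_image_of_injective _ (mul_right_injective g)
  have hsub : S' ⊆ S := Finset.filter_subset _ _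
  have e1 : ∑ s ∈ S, f (g • s • x) = ∑ s ∈ S \ S', f (g • s • x) + ∑ s ∈ S', f (g • s • x) :=
    (Finset.sum_sdiff hsub).symm
  have e2 : ∑ s ∈ S, f (s • x) = ∑ s ∈ S \ S'.image (fun s => g * s), f (s • x)
      + ∑ s ∈ S', f (g • s • x) := by
    rw [← Finset.sum_sdiff himg, Finset.sum_image (fun a _ b _ h => mul_right_injective g h)]
    simp [mul_smul]
  have b1 : |∑ s ∈ S \ S', f (g • s • x)| ≤ C * (S.card - S'.card) := by
    refine (Finset.abs_sum_le_sum_abs _ _).trans ?_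
    refine (Finset.sum_le_card_nsmul _ _ C (fun s _ => hC _)).trans ?_
    rw [Finset.card_sdiff_of_subset hsub, nsmul_eq_mul, Nat.cast_sub (Finset.card_le_card hsub),
      mul_comm]
  have b2 : |∑ s ∈ S \ S'.image (fun s => g * s), f (s • x)| ≤ C * (S.card - S'.card) := by
    refine (Finset.abs_sum_le_sum_abs _ _).trans ?_
    refine (Finset.sum_le_card_nsmul _ _ C (fun s _ => hC _)).trans ?_
    rw [Finset.card_sdiff_of_subset himg, nsmul_eq_mul, Nat.cast_sub (Finset.card_le_card himg),
      mul_comm, hcimg]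
  have b3 : C * ((S.card : ℝ) - S'.card) ≤ C * (δ * S.card) :=
    mul_le_mul_of_nonneg_left (by linarith) hC0
  unfold eavg
  rw [← mul_sub, e1, e2, abs_mul, abs_of_pos (inv_pos.2 hc), inv_mul_le_iff₀ hc]
  rw [add_sub_add_right_eq_sub]
  refine (abs_sub _ _).trans ?_
  nlinarith

theorem exists_folner_seq [Group G] [Countable G] [MulAction G X] (hG : AmenableGroup G) :
    ∃ S : ℕ → Finset G, (∀ n, (S n).Nonempty) ∧
      ∀ (g : G) (f : X → ℝ) (C : ℝ), (∀ x, |f x| ≤ C) → ∀ δ > 0, ∀ᶠ n in atTop, ∀ x,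
        |eavg (S n) (fun y => f (g • y)) x - eavg (S n) f x| ≤ δ := by
  classical
  obtain ⟨e, he⟩ := exists_surjective_nat G
  have h : ∀ n : ℕ, ∃ S : Finset G, S.Nonempty ∧
      FolnerInv G ((Finset.range n).image e) (1 / ((n : ℝ) + 1)) S :=
    fun n => hG _ _ (by positivity)
  choose S hne hF using h
  refine ⟨S, hne, fun g f C hC δ hδ => ?_⟩
  obtain ⟨m, rfl⟩ := he g
  have ht : Tendsto (fun n : ℕ => 2 * C * (1 / ((n : ℝ) + 1))) atTop (𝓝 0) := by
    simpa using tendsto_one_div_add_atTop_nhds_zero_nat.const_mul (2 * C)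
  filter_upwards [ht.eventually (gt_mem_nhds hδ), eventually_gt_atTop m] with n h1 h2 x
  refine (eavg_folner (S n) (hne n) _ _ (hF n) (e m) ?_ f C hC x).trans h1.le
  exact Finset.mem_image_of_mem _ (Finset.mem_range.2 h2)

section Top

variable [Group G] [MetricSpace X] [CompactSpace X] [MeasurableSpace X] [BorelSpace X]
    [MulAction G X] [ContinuousConstSMul G X]

theorem eavg_cont (S : Finset G) (f : X → ℝ) (hf : Continuous f) : Continuous (eavg S f) := by
  unfold eavg
  fun_prop

theorem cint (f : X → ℝ) (hf : Continuous f) (μ : Measure X) [IsFiniteMeasure μ] :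
    Integrable f μ :=
  hf.integrable_of_hasCompactSupport (HasCompactSupport.of_compactSpace f)

theorem inv_mp (μ : ProbabilityMeasure X) (hμ : InvariantMeasure G X μ) (g : G) :
    MeasurePreserving (fun x : X => g • x) (μ : Measure X) (μ : Measure X) :=
  ⟨(continuous_const_smul g).measurable, hμ g⟩

theorem inv_int (μ : ProbabilityMeasure X) (hμ : InvariantMeasure G X μ) (g : G) (f : X → ℝ)
    (hf : Continuous f) : ∫ x, f (g • x) ∂(μ : Measure X) = ∫ x, f x ∂(μ : Measure X) := by
  conv_rhs => rw [← hμ g]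
  rw [integral_map (continuous_const_smul g).aemeasurable]
  exact hf.aestronglyMeasurable

theorem eavg_int (μ : ProbabilityMeasure X) (hμ : InvariantMeasure G X μ) (S : Finset G)
    (hS : S.Nonempty) (f : X → ℝ) (hf : Continuous f) :
    ∫ x, eavg S f x ∂(μ : Measure X) = ∫ x, f x ∂(μ : Measure X) := by
  have hc : (S.card : ℝ) ≠ 0 := by exact_mod_cast hS.card_pos.ne'
  unfold eavg
  rw [integral_const_mul, integral_finsetSum]
  · simp only [inv_int μ hμ _ f hf, Finset.sum_const, nsmul_eq_mul]
    field_simp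
  · intro s _
    exact cint _ (hf.comp (continuous_const_smul s)) _

theorem eavg_sq (S : Finset G) (hS : S.Nonempty) (k : X → ℝ) (c : ℝ) (x : X) :
    (eavg S k x - c) ^ 2 ≤ eavg S (fun y => (k y - c) ^ 2) x := by
  have hc : (0 : ℝ) < S.card := by exact_mod_cast hS.card_pos
  have h := sq_sum_le_card_mul_sum_sq (s := S) (f := fun s => k (s • x) - c)
  rw [Finset.sum_sub_distrib] at h
  simp only [Finset.sum_const, nsmul_eq_mul] at h
  unfold eavg
  have e : (S.card : ℝ)⁻¹ * ∑ s ∈ S, k (s • x) - c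
      = (S.card : ℝ)⁻¹ * (∑ s ∈ S, k (s • x) - S.card * c) := by field_simp
  rw [e, mul_pow]
  calc _ ≤ ((S.card : ℝ)⁻¹) ^ 2 * (S.card * ∑ s ∈ S, (k (s • x) - c) ^ 2) := by gcongr
    _ = _ := by field_simp

theorem eavg_var (μ : ProbabilityMeasure X) (hμ : InvariantMeasure G X μ) (S : Finset G)
    (hS : S.Nonempty) (f k : X → ℝ) (hf : Continuous f) (hk : Continuous k) (c η : ℝ)
    (h : ∀ x, |eavg S k x - eavg S f x| ≤ η) :
    ∫ x, (eavg S f x - c) ^ 2 ∂(μ : Measure X) ≤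
      2 * η ^ 2 + 2 * ∫ x, (k x - c) ^ 2 ∂(μ : Measure X) := by
  have hk2 : Continuous fun y => (k y - c) ^ 2 := by fun_prop
  have hA := eavg_cont S f hf
  have hB := eavg_cont S _ hk2
  rw [← eavg_int μ hμ S hS _ hk2]
  calc _ ≤ ∫ x, (2 * η ^ 2 + 2 * eavg S (fun y => (k y - c) ^ 2) x) ∂(μ : Measure X) := by
        refine integral_mono (cint _ (by fun_prop) _) (cint _ (by fun_prop) _) fun x => ?_
        have h1 := eavg_sq S hS k c x
        have h2 := sq_le_sq' (by linarith [(abs_le.1 (h x)).1]) (abs_le.1 (h x)).2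
        have h3 := sq_nonneg ((eavg S f x - eavg S k x) - (eavg S k x - c))
        dsimp only
        nlinarith
    _ = _ := by
        rw [integral_add (cint _ (by fun_prop) _) (cint _ (by fun_prop) _), integral_const_mul]
        simp [integral_const_mul]

/-- translate of a continuous function -/
def ctr (g : G) (f : C(X, ℝ)) : C(X, ℝ) := ⟨fun x => f (g • x), by fun_prop⟩

theorem erg_const [Countable G] (μ : ProbabilityMeasure X) (hμ : μ ∈ EG G X) (v : X → ℝ)
    (hv : AEStronglyMeasurable v (μ : Measure X))
    (hinv : ∀ g : G, (fun x => v (g • x)) =ᵐ[(μ : Measure X)] v) :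
    ∃ c, v =ᵐ[(μ : Measure X)] Function.const X c := by
  set w := hv.mk v with hw
  have hwm : Measurable w := hv.stronglyMeasurable_mk.measurable
  have hvw : v =ᵐ[(μ : Measure X)] w := hv.ae_eq_mk
  have hwinv : ∀ᵐ x ∂(μ : Measure X), ∀ g : G, w (g • x) = w x := by
    rw [ae_all_iff]
    intro g
    have h1 := (inv_mp μ hμ.1 g).quasiMeasurePreserving.ae hvw
    filter_upwards [h1, hvw, hinv g] with x a b c
    rw [← a, ← b, ← c]
  suffices h : ∃ c, w =ᵐ[(μ : Measure X)] Function.const X c by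
    obtain ⟨c, hc⟩ := h
    exact ⟨c, hvw.trans hc⟩
  refine exists_eventuallyEq_const_of_forall_separating MeasurableSet fun U hU => ?_
  let A : Set X := ⋂ g : G, (fun x => g • x) ⁻¹' (w ⁻¹' U)
  have hAm : MeasurableSet A :=
    MeasurableSet.iInter fun g => (continuous_const_smul g).measurable (hwm hU)
  have hAinv : ∀ g : G, g • A = A := by
    intro g
    ext x
    rw [Set.mem_smul_set_iff_inv_smul_mem]
    simp only [A, Set.mem_iInter, Set.mem_preimage, smul_smul]
    constructor
    · intro h k
      simpa using h (k * g)
    · intro h k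
      exact h _
  have hAw : ∀ᵐ x ∂(μ : Measure X), x ∈ A ↔ w x ∈ U := by
    filter_upwards [hwinv] with x hx
    simp [A, hx]
  rcases hμ.2 A hAm hAinv with h0 | h1
  · right
    have : ∀ᵐ x ∂(μ : Measure X), x ∉ A := by
      rw [ae_iff]
      simpa [ProbabilityMeasure.null_iff_toMeasure_null] using h0
    filter_upwards [this, hAw] with x a b
    exact fun h => a (b.2 h)
  · left
    have : ∀ᵐ x ∂(μ : Measure X), x ∈ A := by
      have h2 : (μ : Measure X) A = 1 := by
        rw [← ProbabilityMeasure.ennreal_coeFn_eq_coeFn_toMeasure, h1]; rfl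
      exact (prob_compl_eq_zero_iff hAm).2 h2
    filter_upwards [this, hAw] with x a b
    exact b.1 a

theorem mean_erg [Countable G] (μ : ProbabilityMeasure X) (hμ : μ ∈ EG G X) (f : C(X, ℝ))
    (δ : ℝ) (hδ : 0 < δ) :
    ∃ k ∈ convexHull ℝ (Set.range fun g : G => ctr g f), ∃ c : ℝ,
      ∫ x, (k x - c) ^ 2 ∂(μ : Measure X) < δ := by
  let m : Measure X := μ
  let T := ContinuousMap.toLp (E := ℝ) 2 m ℝ
  let H : Set (Lp ℝ 2 m) := T '' (convexHull ℝ (Set.range fun g : G => ctr g f))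
  have hHc : Convex ℝ H := (convex_convexHull ℝ _).linear_image T.toLinearMap
  have hHn : H.Nonempty :=
    ⟨_, Set.mem_image_of_mem T (subset_convexHull ℝ _ (Set.mem_range_self (1 : G)))⟩
  obtain ⟨v, hvC, hv⟩ := exists_norm_eq_iInf_of_complete_convex hHn.closure
    isClosed_closure.isComplete hHc.closure 0
  rw [norm_eq_iInf_iff_real_inner_le_zero hHc.closure hvC] at hv
  have hUC : ∀ g : G, Lp.compMeasurePreservingₗᵢ ℝ _ (inv_mp μ hμ.1 g) v ∈ closure H := by
    intro g
    let U : Lp ℝ 2 m →ₗᵢ[ℝ] Lp ℝ 2 m := Lp.compMeasurePreservingₗᵢ ℝ _ (inv_mp μ hμ.1 g)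
    have hmap : MapsTo U H H := by
      have hUT : ∀ k : C(X, ℝ), U (T k) = T (ctr g k) := by
        intro k
        apply Lp.ext
        have h1 := Lp.coeFn_compMeasurePreserving (T k) (inv_mp μ hμ.1 g)
        have h2 := ContinuousMap.coeFn_toLp (p := 2) (𝕜 := ℝ) m k
        have h3 := ContinuousMap.coeFn_toLp (p := 2) (𝕜 := ℝ) m (ctr g k)
        have h4 := (inv_mp μ hμ.1 g).quasiMeasurePreserving.ae h2
        refine h1.trans ?_
        filter_upwards [h3, h4] with x a b
        rw [a]
        exact b
      rintro _ ⟨k, hk, rfl⟩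
      rw [hUT]
      refine Set.mem_image_of_mem T ?_
      have hlin : IsLinearMap ℝ (ctr g : C(X, ℝ) → C(X, ℝ)) :=
        ⟨fun _ _ => rfl, fun _ _ => rfl⟩
      have : ctr g k ∈ ctr g '' convexHull ℝ (Set.range fun g : G => ctr g f) :=
        Set.mem_image_of_mem _ hk
      rw [hlin.image_convexHull] at this
      refine convexHull_mono ?_ this
      rintro _ ⟨_, ⟨h, rfl⟩, rfl⟩
      refine ⟨h * g, ?_⟩
      ext x
      simp [ctr, mul_smul]
    exact hmap.closure U.continuous hvC
  have hfix : ∀ g : G, Lp.compMeasurePreservingₗᵢ ℝ _ (inv_mp μ hμ.1 g) v = v := by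
    intro g
    have h1 := hv _ (hUC g)
    set u := Lp.compMeasurePreservingₗᵢ ℝ _ (inv_mp μ hμ.1 g) v with hu
    have hn : ‖u‖ = ‖v‖ := LinearIsometry.norm_map _ _
    rw [zero_sub, inner_neg_left, inner_sub_right, real_inner_self_eq_norm_sq] at h1
    have h2 := norm_sub_sq_real v u
    have h3 : ‖v - u‖ ^ 2 ≤ 0 := by rw [h2, hn]; linarith
    have h4 : ‖v - u‖ = 0 := by
      have := le_antisymm h3 (sq_nonneg _)
      exact pow_eq_zero_iff (two_ne_zero) |>.1 this
    exact (sub_eq_zero.1 (norm_eq_zero.1 h4)).symm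
  obtain ⟨c, hc⟩ := erg_const μ hμ v (Lp.aestronglyMeasurable v) (by
    intro g
    have h1 := Lp.coeFn_compMeasurePreserving v (inv_mp μ hμ.1 g)
    have h2 : Lp.compMeasurePreserving _ (inv_mp μ hμ.1 g) v = v := hfix g
    rw [h2] at h1
    exact h1.symm)
  obtain ⟨_, ⟨k, hk, rfl⟩, hkd⟩ := Metric.mem_closure_iff.1 hvC (√δ) (Real.sqrt_pos.2 hδ)
  refine ⟨k, hk, c, ?_⟩
  have hI : ∫ x, (k x - c) ^ 2 ∂m = ‖T k - v‖ ^ 2 := by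
    rw [← real_inner_self_eq_norm_sq, L2.inner_def]
    refine integral_congr_ae ?_
    have h2 := ContinuousMap.coeFn_toLp (p := 2) (𝕜 := ℝ) m k
    filter_upwards [hc, h2, Lp.coeFn_sub (T k) v] with x a b d
    rw [d]
    simp only [Pi.sub_apply, a]
    rw [b]
    simp [sq]
  change ∫ x, (k x - c) ^ 2 ∂m < δ
  rw [hI, ← dist_eq_norm, dist_comm]
  calc _ < (√δ) ^ 2 := by gcongr
    _ = δ := Real.sq_sqrt hδ.le


theorem hull_avg (S : ℕ → Finset G)
    (hS : ∀ (g : G) (f : X → ℝ) (C : ℝ), (∀ x, |f x| ≤ C) → ∀ δ > 0, ∀ᶠ n in atTop, ∀ x,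
        |eavg (S n) (fun y => f (g • y)) x - eavg (S n) f x| ≤ δ) (f k : C(X, ℝ))
    (hk : k ∈ convexHull ℝ (Set.range fun g : G => ctr g f)) (δ : ℝ) (hδ : 0 < δ) :
    ∀ᶠ n in atTop, ∀ x, |eavg (S n) k x - eavg (S n) f x| ≤ δ := by
  have key : convexHull ℝ (Set.range fun g : G => ctr g f) ⊆
      {k : C(X, ℝ) | ∀ δ > 0, ∀ᶠ n in atTop, ∀ x, |eavg (S n) k x - eavg (S n) f x| ≤ δ} := by
    refine convexHull_min ?_ ?_
    · rintro _ ⟨g, rfl⟩ δ hδ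
      exact hS g f ‖f‖ (fun x => f.norm_coe_le_norm x) δ hδ
    · intro a ha b hb s t hs ht hst δ hδ
      filter_upwards [ha δ hδ, hb δ hδ] with n h1 h2 x
      have e : eavg (S n) (s • a + t • b : C(X, ℝ)) x = s * eavg (S n) a x + t * eavg (S n) b x := by
        simp only [eavg, ContinuousMap.add_apply, ContinuousMap.smul_apply, smul_eq_mul,
          Finset.sum_add_distrib, ← Finset.mul_sum]
        ring
      have e2 : eavg (S n) (s • a + t • b : C(X, ℝ)) x - eavg (S n) f x
          = s * (eavg (S n) a x - eavg (S n) f x) + t * (eavg (S n) b x - eavg (S n) f x) := by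
        rw [e]
        linear_combination (eavg (S n) f x) * hst
      rw [e2]
      refine (abs_add_le _ _).trans ?_
      rw [abs_mul, abs_mul, abs_of_nonneg hs, abs_of_nonneg ht]
      calc _ ≤ s * δ + t * δ := by gcongr; exacts [h1 x, h2 x]
        _ = δ := by rw [← add_mul, hst, one_mul]
  exact key hk δ hδ

theorem var_min (μ : ProbabilityMeasure X) (u : X → ℝ) (hu : Continuous u) (c : ℝ) :
    ∫ x, (u x - ∫ y, u y ∂(μ : Measure X)) ^ 2 ∂(μ : Measure X) ≤
      ∫ x, (u x - c) ^ 2 ∂(μ : Measure X) := by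
  set m := ∫ y, u y ∂(μ : Measure X) with hm
  have e : ∫ x, (u x - c) ^ 2 ∂(μ : Measure X) =
      ∫ x, (u x - m) ^ 2 ∂(μ : Measure X) + (m - c) ^ 2 := by
    have h1 : ∀ x, (u x - c) ^ 2 = (u x - m) ^ 2 + (2 * (m - c) * (u x - m) + (m - c) ^ 2) := by
      intro x; ring
    simp_rw [h1]
    rw [integral_add (cint _ (by fun_prop) _) (cint _ (by fun_prop) _),
      integral_add (cint _ (by fun_prop) _) (cint _ (by fun_prop) _), integral_const_mul,
      integral_sub (cint _ hu _) (cint _ (by fun_prop) _), ← hm]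
    simp
  rw [e]
  nlinarith [sq_nonneg (m - c)]

theorem cont_int (f : C(X, ℝ)) :
    Continuous fun μ : ProbabilityMeasure X => ∫ x, f x ∂(μ : Measure X) :=
  ProbabilityMeasure.continuous_iff_forall_continuousMap_continuous_integral.1 continuous_id f

theorem unif_erg [Countable G] (hcpt : IsCompact (EG G X)) (S : ℕ → Finset G)
    (hne : ∀ n, (S n).Nonempty)
    (hS : ∀ (g : G) (f : X → ℝ) (C : ℝ), (∀ x, |f x| ≤ C) → ∀ δ > 0, ∀ᶠ n in atTop, ∀ x,
        |eavg (S n) (fun y => f (g • y)) x - eavg (S n) f x| ≤ δ) (f : C(X, ℝ)) (δ : ℝ)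
    (hδ : 0 < δ) :
    ∀ᶠ n in atTop, ∀ μ ∈ EG G X,
      ∫ x, (eavg (S n) f x - ∫ y, f y ∂(μ : Measure X)) ^ 2 ∂(μ : Measure X) < δ := by
  suffices h : ∀ᶠ n in atTop, ∀ μ ∈ EG G X, μ ∈ EG G X →
      ∫ x, (eavg (S n) f x - ∫ y, f y ∂(μ : Measure X)) ^ 2 ∂(μ : Measure X) < δ by
    filter_upwards [h] with n hn μ hμ using hn μ hμ hμ
  refine hcpt.induction_on (p := fun s => ∀ᶠ n in atTop, ∀ μ ∈ s, μ ∈ EG G X →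
      ∫ x, (eavg (S n) f x - ∫ y, f y ∂(μ : Measure X)) ^ 2 ∂(μ : Measure X) < δ) ?_ ?_ ?_ ?_
  · simp
  · intro s t hst ht
    filter_upwards [ht] with n hn μ hμ using hn μ (hst hμ)
  · intro s t hs ht
    filter_upwards [hs, ht] with n h1 h2 μ hμ
    exact hμ.elim (h1 μ) (h2 μ)
  · intro μ hμ
    obtain ⟨k, hk, c, hkc⟩ := mean_erg μ hμ f (δ / 4) (by positivity)
    have hc := cont_int (X := X) ⟨fun x => (k x - c) ^ 2, by fun_prop⟩
    have hU : ∀ᶠ ν : ProbabilityMeasure X in 𝓝 μ, ∫ x, (k x - c) ^ 2 ∂(ν : Measure X) < δ / 4 :=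
      hc.continuousAt.eventually (gt_mem_nhds hkc)
    refine ⟨{ν | ∫ x, (k x - c) ^ 2 ∂(ν : Measure X) < δ / 4},
      mem_nhdsWithin_of_mem_nhds hU, ?_⟩
    filter_upwards [hull_avg S hS f k hk (√(δ / 4)) (by positivity)] with n hn ν hν hνE
    have h1 := eavg_var ν hνE.1 (S n) (hne n) f k f.continuous k.continuous c _ hn
    have h2 := var_min ν (eavg (S n) f) (eavg_cont _ _ f.continuous) c
    rw [eavg_int ν hνE.1 (S n) (hne n) f f.continuous] at h2
    rw [Real.sq_sqrt (by positivity)] at h1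
    have hν' : ∫ x, (k x - c) ^ 2 ∂(ν : Measure X) < δ / 4 := hν
    linarith

/-- evaluation of continuous functions on ergodic measures -/
def ephi (f : C(X, ℝ)) : C(EG G X, ℝ) :=
  ⟨fun μ => ∫ x, f x ∂((μ : ProbabilityMeasure X) : Measure X),
    (cont_int f).comp continuous_subtype_val⟩

theorem ephi_dense [Countable G] (hcpt : IsCompact (EG G X)) (hG : AmenableGroup G)
    (h : C(EG G X, ℝ)) (δ : ℝ) (hδ : 0 < δ) :
    ∃ f : C(X, ℝ), ∀ μ : EG G X,
      |∫ x, f x ∂((μ : ProbabilityMeasure X) : Measure X) - h μ| < δ := by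
  have : CompactSpace (EG G X) := isCompact_iff_compactSpace.1 hcpt
  obtain ⟨S, hne, hS⟩ := exists_folner_seq (X := X) hG
  have hmul : ∀ f g : C(X, ℝ), ephi (G := G) f * ephi g ∈ closure (Set.range (ephi (G := G) (X := X))) := by
    intro f g
    rw [Metric.mem_closure_iff]
    intro ε hε
    obtain ⟨n, hn⟩ := (unif_erg hcpt S hne hS f ((ε / (2 * (‖g‖ + 1))) ^ 2)
      (by positivity)).exists
    refine ⟨_, ⟨⟨eavg (S n) f, eavg_cont _ _ f.continuous⟩ * g, rfl⟩, ?_⟩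
    refine lt_of_le_of_lt ((ContinuousMap.dist_le (C := ε / 2) (by positivity)).2 ?_) (half_lt_self hε)
    intro μ
    set ν : Measure X := ((μ : ProbabilityMeasure X) : Measure X) with hν
    have h1 := hn μ μ.2
    have hA := eavg_cont (S n) f f.continuous
    set a := ∫ y, f y ∂ν with ha
    have e : (ephi (G := G) f * ephi (G := G) g) μ - ephi (G := G) (⟨eavg (S n) f, hA⟩ * g) μ
        = - ∫ x, (eavg (S n) f x - a) * g x ∂ν := by
      change a * ∫ x, g x ∂ν - ∫ x, eavg (S n) f x * g x ∂ν = _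
      simp_rw [sub_mul]
      rw [integral_sub (cint _ (by fun_prop) _) (cint _ (by fun_prop) _), integral_const_mul]
      ring
    rw [Real.dist_eq, e, abs_neg]
    set I := ∫ x, |eavg (S n) f x - a| ∂ν with hI
    have hI0 : 0 ≤ I := integral_nonneg fun x => abs_nonneg _
    have hI2 : I ^ 2 ≤ ∫ x, (eavg (S n) f x - a) ^ 2 ∂ν := by
      have h3 := var_min (μ : ProbabilityMeasure X) (fun x => |eavg (S n) f x - a|) (by fun_prop) I
      have h4 : 0 ≤ ∫ x, (|eavg (S n) f x - a| - I) ^ 2 ∂ν := integral_nonneg fun x => sq_nonneg _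
      have h5 : ∫ x, (|eavg (S n) f x - a| - I) ^ 2 ∂ν
          = ∫ x, (eavg (S n) f x - a) ^ 2 ∂ν - I ^ 2 := by
        have : ∀ x, (|eavg (S n) f x - a| - I) ^ 2
            = (eavg (S n) f x - a) ^ 2 + (I ^ 2 - 2 * I * |eavg (S n) f x - a|) := by
          intro x
          rw [← sq_abs (eavg (S n) f x - a)]
          ring
        simp_rw [this]
        rw [integral_add (cint _ (by fun_prop) _) (cint _ (by fun_prop) _),
          integral_sub (cint _ (by fun_prop) _) (cint _ (by fun_prop) _), integral_const_mul, ← hI]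
        simp
        ring
      linarith
    have hI3 : I ≤ ε / (2 * (‖g‖ + 1)) := by
      refine le_of_sq_le_sq ?_ (by positivity)
      exact hI2.trans h1.le
    calc |∫ x, (eavg (S n) f x - a) * g x ∂ν|
        ≤ ∫ x, |(eavg (S n) f x - a) * g x| ∂ν := abs_integral_le_integral_abs
      _ ≤ ∫ x, |eavg (S n) f x - a| * ‖g‖ ∂ν := by
          refine integral_mono (cint _ (by fun_prop) _) (cint _ (by fun_prop) _) fun x => ?_
          dsimp only
          rw [abs_mul]
          exact mul_le_mul_of_nonneg_left (g.norm_coe_le_norm x) (abs_nonneg _)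
      _ = I * ‖g‖ := integral_mul_const _ _
      _ ≤ (ε / (2 * (‖g‖ + 1))) * (‖g‖ + 1) := by gcongr; linarith
      _ = ε / 2 := by field_simp
  let V : Subalgebra ℝ C(EG G X, ℝ) :=
    { carrier := closure (Set.range (ephi (G := G) (X := X)))
      mul_mem' := by
        intro a b ha hb
        have := map_mem_closure₂ (f := fun a b : C(EG G X, ℝ) => a * b) continuous_mul ha hb
          (u := closure (Set.range (ephi (G := G) (X := X)))) (by
            rintro _ ⟨f, rfl⟩ _ ⟨g, rfl⟩
            exact hmul f g)
        rwa [closure_closure] at this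
      add_mem' := by
        intro a b ha hb
        refine map_mem_closure₂ (f := fun a b : C(EG G X, ℝ) => a + b) continuous_add ha hb ?_
        rintro _ ⟨f, rfl⟩ _ ⟨g, rfl⟩
        refine ⟨f + g, ?_⟩
        ext μ
        exact integral_add (cint _ f.continuous _) (cint _ g.continuous _)
      algebraMap_mem' := by
        intro r
        refine subset_closure ⟨ContinuousMap.const X r, ?_⟩
        ext μ
        simp [ephi] }
  have hsep : V.SeparatesPoints := by
    intro μ ν hμν
    by_contra hcon
    apply hμν
    apply Subtype.ext
    apply Subtype.ext
    change ((μ : ProbabilityMeasure X) : Measure X) = ((ν : ProbabilityMeasure X) : Measure X)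
    refine ext_of_forall_integral_eq_of_IsFiniteMeasure fun f => ?_
    by_contra hf
    exact hcon ⟨_, ⟨ephi f.toContinuousMap, subset_closure ⟨_, rfl⟩, rfl⟩, hf⟩
  have htop := ContinuousMap.subalgebra_topologicalClosure_eq_top_of_separatesPoints V hsep
  have hmem : h ∈ V.topologicalClosure := by rw [htop]; trivial
  have hmem2 : h ∈ closure (Set.range (ephi (G := G) (X := X))) := by
    have h1 : h ∈ closure (closure (Set.range (ephi (G := G) (X := X)))) := hmem
    rwa [closure_closure] at h1
  obtain ⟨_, ⟨f, rfl⟩, hf⟩ := Metric.mem_closure_iff.1 hmem2 δ hδ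
  refine ⟨f, fun μ => ?_⟩
  have := (ContinuousMap.dist_lt_iff hδ).1 hf μ
  rw [dist_comm, Real.dist_eq] at this
  exact this

theorem exists_step (hcpt : IsCompact (EG G X)) (L : ℕ)
    (W : Fin L → Set (ProbabilityMeasure X)) (hWclosed : ∀ j, IsClosed (W j))
    (hWdisj : ∀ j j', j ≠ j' → Disjoint (W j) (W j')) :
    ∃ h : C(EG G X, ℝ), ∀ j, ∀ μ : EG G X, (μ : ProbabilityMeasure X) ∈ W j → h μ = (j : ℕ) := by
  have : CompactSpace (EG G X) := isCompact_iff_compactSpace.1 hcpt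
  let W' : Fin L → Set (EG G X) := fun j => Subtype.val ⁻¹' W j
  have hW' : ∀ j, IsClosed (W' j) := fun j => (hWclosed j).preimage continuous_subtype_val
  have hu : ∀ j, ∃ f : C(EG G X, ℝ), EqOn f 0 (⋃ i : {i : Fin L // i ≠ j}, W' i) ∧
      EqOn f 1 (W' j) ∧ ∀ x, f x ∈ Icc (0 : ℝ) 1 := by
    intro j
    refine exists_continuous_zero_one_of_isClosed (isClosed_iUnion_of_finite fun i => hW' i)
      (hW' j) ?_
    rw [Set.disjoint_iUnion_left]
    intro i
    exact (hWdisj i j i.2).preimage _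
  choose f hf0 hf1 _ using hu
  refine ⟨∑ j : Fin L, ((j : ℕ) : ℝ) • f j, fun j μ hμ => ?_⟩
  rw [ContinuousMap.sum_apply, Finset.sum_eq_single j]
  · have := hf1 j (show μ ∈ W' j from hμ)
    simp [this]
  · intro i _ hij
    have := hf0 i (show μ ∈ ⋃ k : {k : Fin L // k ≠ i}, W' k from
      Set.mem_iUnion.2 ⟨⟨j, hij.symm⟩, hμ⟩)
    simp [this]
  · simp

end Top
end ErgHelpers

/-- If `E_G(X)` is compact, then for every `ε > 0` and finite family of pairwise
disjoint closed subsets `W_1, …, W_L` of `E_G(X)` there are pairwise disjoint compact subsets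
`K_1, …, K_L` of `X` with `μ(K_j) > 1 - ε` for every `μ ∈ W_j`. -/
theorem exists_disjoint_compacts_for_disjoint_closed_ergodic_sets
    {G X : Type*} [Group G] [Countable G] [Infinite G]
    [MetricSpace X] [CompactSpace X] [Infinite X]
    [MeasurableSpace X] [BorelSpace X]
    [MulAction G X] [ContinuousConstSMul G X]
    (hG : AmenableGroup G)
    (hfree : FreeAction G X) (hmin : MinimalAction G X)
    (hcpt : IsCompact (EG G X))
    (ε : ℝ) (hε : 0 < ε) (L : ℕ)
    (W : Fin L → Set (ProbabilityMeasure X))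
    (hWclosed : ∀ j, IsClosed (W j))
    (hWsub : ∀ j, W j ⊆ EG G X)
    (hWdisj : ∀ j j', j ≠ j' → Disjoint (W j) (W j')) :
    ∃ K : Fin L → Set X,
      (∀ j, IsCompact (K j)) ∧
      (∀ j j', j ≠ j' → Disjoint (K j) (K j')) ∧
      ∀ j, ∀ μ ∈ W j, 1 - ε < (μ (K j) : ℝ) := by
  obtain ⟨h, hh⟩ := exists_step hcpt L W hWclosed hWdisj
  obtain ⟨f, hf⟩ := ephi_dense hcpt hG h (1 / 12) (by norm_num)
  obtain ⟨S, hne, hS⟩ := exists_folner_seq (X := X) hG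
  obtain ⟨n, hn⟩ := (unif_erg hcpt S hne hS f (ε / 16) (by positivity)).exists
  have hgc := eavg_cont (S n) f f.continuous
  have hKc : ∀ j : Fin L, IsClosed {x | |eavg (S n) f x - ((j : ℕ) : ℝ)| ≤ 1 / 3} := fun j =>
    isClosed_le (by fun_prop) continuous_const
  refine ⟨fun j => {x | |eavg (S n) f x - ((j : ℕ) : ℝ)| ≤ 1 / 3}, fun j => (hKc j).isCompact,
    ?_, ?_⟩
  · intro j j' hjj
    rw [Set.disjoint_left]
    intro x hx hx'
    simp only [Set.mem_ofPred_eq] at hx hx'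
    rw [abs_le] at hx hx'
    apply hjj
    apply Fin.ext
    rcases lt_trichotomy (j : ℕ) (j' : ℕ) with hlt | heq | hlt
    · have : ((j : ℕ) : ℝ) + 1 ≤ ((j' : ℕ) : ℝ) := by exact_mod_cast hlt
      linarith
    · exact heq
    · have : ((j' : ℕ) : ℝ) + 1 ≤ ((j : ℕ) : ℝ) := by exact_mod_cast hlt
      linarith
  · intro j μ hμ
    have hμE := hWsub j hμ
    have h1 := hn μ hμE
    have h2 := hf ⟨μ, hμE⟩
    rw [hh j ⟨μ, hμE⟩ hμ] at h2
    set m := ∫ y, f y ∂(μ : Measure X) with hm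
    have h2' : |m - ((j : ℕ) : ℝ)| < 1 / 12 := h2
    set K := {x | |eavg (S n) f x - ((j : ℕ) : ℝ)| ≤ 1 / 3} with hK
    have hcheb := mul_meas_ge_le_integral_of_nonneg (μ := (μ : Measure X))
      (f := fun x => (eavg (S n) f x - m) ^ 2) (ae_of_all _ fun x => sq_nonneg _)
      (cint _ (by fun_prop) _) (1 / 16)
    have hsub : Kᶜ ⊆ {x | 1 / 16 ≤ (eavg (S n) f x - m) ^ 2} := by
      intro x hx
      simp only [hK, Set.mem_compl_iff, Set.mem_ofPred_eq, not_le] at hx ⊢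
      have h3 : 1 / 4 ≤ |eavg (S n) f x - m| := by
        have := abs_add_le (eavg (S n) f x - m) (m - ((j : ℕ) : ℝ))
        rw [sub_add_sub_cancel] at this
        linarith
      rw [← sq_abs]
      nlinarith
    have hmono := measureReal_mono (μ := (μ : Measure X)) hsub
    have hcompl := probReal_compl_eq_one_sub (μ := (μ : Measure X)) (hKc j).measurableSet
    have hgoal : (μ K : ℝ) = (μ : Measure X).real K := rfl
    rw [hgoal]
    rw [← hK] at hcompl
    linarith
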